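/- Let G ≤ PL₊(I) and let H be a subgroup of the split group S(G) with G ≤ H ≤ S(G). If H admits a bad overlap, then G also admits a bad overlap and G is not soluble. -/

import Mathlib

open Set

namespace PLPaper

/-- We model `PL₊(I)` inside the group of bijections of `ℝ` with *opposite*
composition, so that the group acts on `ℝ` on the right:
`x · (g * h) = (x · g) · h`. -/
abbrev PermR : Type := (Equiv.Perm ℝ)ᵐᵒᵖ

/-- The (right) action of `g` on the point `x`. -/
def ap (g : PermR) (x : ℝ) : ℝ := g.unop x

/-- `g` is affine on a neighbourhood of `x`. -/
def IsLocallyAffineAt (g : PermR) (x : ℝ) : Prop :=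
  ∃ m b : ℝ, ∀ᶠ y in nhds x, ap g y = m * y + b

/-- The breakpoints of `g`: points of `(0,1)` where `g` is not locally affine
(equivalently, for a PL map, where the derivative fails to exist). -/
def Breakpoints (g : PermR) : Set ℝ :=
  {x ∈ Ioo (0:ℝ) 1 | ¬ IsLocallyAffineAt g x}

/-- `g` is an orientation-preserving piecewise-linear homeomorphism of `[0,1]`
(extended by the identity to all of `ℝ`), with finitely many breakpoints. -/
def IsPL (g : PermR) : Prop :=
  StrictMono (ap g) ∧ (∀ x ∉ Ioo (0:ℝ) 1, ap g x = x) ∧ (Breakpoints g).Finite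

/-- The support of `g`. -/
def Supp (g : PermR) : Set ℝ := {x | ap g x ≠ x}

/-- `(a,b)` is an orbital of `g`, i.e. a connected component of `Supp g`. -/
def IsOrbital (g : PermR) (a b : ℝ) : Prop :=
  a < b ∧ Ioo a b ⊆ Supp g ∧ a ∉ Supp g ∧ b ∉ Supp g

/-- The support of a subgroup `G`. -/
def GSupp (G : Subgroup PermR) : Set ℝ := ⋃ g ∈ (G : Set PermR), Supp g

/-- `(a,b)` is an orbital of the group `G`, i.e. a connected component of its support. -/
def IsGroupOrbital (G : Subgroup PermR) (a b : ℝ) : Prop :=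
  a < b ∧ Ioo a b ⊆ GSupp G ∧ a ∉ GSupp G ∧ b ∉ GSupp G

/-- The pair `g, h` carries a transition chain: orbitals `(a,b)` of `g` and
`(c,d)` of `h` with `a < c < b < d`. -/
def ElemsTransitionChain (g h : PermR) : Prop :=
  ∃ a b c d : ℝ, IsOrbital g a b ∧ IsOrbital h c d ∧ a < c ∧ c < b ∧ b < d

/-- The pair `g, h` carries a one-sided overlap: orbitals `(a,b)` of `g` and
`(a,c)` of `h`, or `(a,b)` of `g` and `(c,b)` of `h`, where `a < c < b`. -/
def ElemsOneSidedOverlap (g h : PermR) : Prop :=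
  ∃ a b c : ℝ, a < c ∧ c < b ∧
    ((IsOrbital g a b ∧ IsOrbital h a c) ∨ (IsOrbital g a b ∧ IsOrbital h c b))

def AdmitsTransitionChain (G : Subgroup PermR) : Prop :=
  ∃ g ∈ G, ∃ h ∈ G, ElemsTransitionChain g h

def AdmitsOneSidedOverlap (G : Subgroup PermR) : Prop :=
  ∃ g ∈ G, ∃ h ∈ G, ElemsOneSidedOverlap g h

/-- `G` admits a bad overlap: orbitals `A` of `f ∈ G` and `B` of `g ∈ G` which
intersect, are distinct, and neither closure is contained in the other orbital. -/
def AdmitsBadOverlap (G : Subgroup PermR) : Prop :=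
  ∃ f ∈ G, ∃ g ∈ G, ∃ a b c d : ℝ, IsOrbital f a b ∧ IsOrbital g c d ∧
    (Ioo a b ∩ Ioo c d).Nonempty ∧ Ioo a b ≠ Ioo c d ∧
    ¬ Icc a b ⊆ Ioo c d ∧ ¬ Icc c d ⊆ Ioo a b

/-- A tower: a set of signed orbitals `((a,b), g)` with pairwise nested orbitals,
where equal orbitals force equal signatures. -/
def IsTower (T : Set ((ℝ × ℝ) × PermR)) : Prop :=
  (∀ p ∈ T, IsOrbital p.2 p.1.1 p.1.2) ∧
  (∀ p ∈ T, ∀ q ∈ T,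
      Ioo p.1.1 p.1.2 ⊆ Ioo q.1.1 q.1.2 ∨ Ioo q.1.1 q.1.2 ⊆ Ioo p.1.1 p.1.2) ∧
  (∀ p ∈ T, ∀ q ∈ T, p.1 = q.1 → p.2 = q.2)

/-- `G` admits the tower `T` if `T` is a tower all of whose signatures lie in `G`. -/
def AdmitsTower (G : Subgroup PermR) (T : Set ((ℝ × ℝ) × PermR)) : Prop :=
  IsTower T ∧ ∀ p ∈ T, p.2 ∈ G

def AdmitsInfiniteTower (G : Subgroup PermR) : Prop :=
  ∃ T : Set ((ℝ × ℝ) × PermR), AdmitsTower G T ∧ T.Infinite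

/-- The set of breakpoints of the elements of a set `S`. -/
def BreakSet (S : Set PermR) : Set ℝ := ⋃ g ∈ S, Breakpoints g

/-- The derived length of a group: the least `n` with `derivedSeries G n = ⊥`. -/
noncomputable def derivedLength (G : Type*) [Group G] : ℕ :=
  sInf {n : ℕ | derivedSeries G n = ⊥}

/-- `g` is the one-bump factor of `f` over the orbital `(a,b)` of `f`:
`g` agrees with `f` on `(a,b)` and is the identity elsewhere. -/
def IsOneBumpFactor (g f : PermR) (a b : ℝ) : Prop :=
  IsOrbital f a b ∧ (∀ x ∈ Ioo a b, ap g x = ap f x) ∧ (∀ x ∉ Ioo a b, ap g x = x)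

/-- `g` is a one-bump factor of `f`. -/
def IsFactorOf (g f : PermR) : Prop := ∃ a b : ℝ, IsOneBumpFactor g f a b

/-- `((a,b), g)` is a factor signed orbital associated to (an element of) `G`. -/
def AssociatedFactor (G : Subgroup PermR) (a b : ℝ) (g : PermR) : Prop :=
  ∃ f ∈ G, IsOneBumpFactor g f a b

/-- The split group `S(G)`: the subgroup generated by the one-bump factors of
all elements of `G`. -/
def SplitGroup (G : Subgroup PermR) : Subgroup PermR :=
  Subgroup.closure {g : PermR | ∃ f ∈ G, IsFactorOf g f}

/-!
Suppose first that `G` has no bad overlap, so that any two orbitals of elements of `G` are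
disjoint, equal or strictly nested. An element `g ∈ G` mapping an orbital `A` onto something that
meets `A` must then preserve `A`: otherwise `g` moves an end of `A` and fixes a point of its
closure, and the orbital of `g` around that end overlaps `A` badly. Consequently, on every set `J`
that no orbital straddles, an element `h` of the split group agrees with some `g ∈ G` up to moving
points inside proper suborbitals of `J`. If `h` moves `x`, apply this to the intersection `J` of
all orbitals containing `x` and `x · h`: the approximating `g` must move `x`, and its orbital
around `x` is `J`, hence also an orbital of `h`. So every orbital of `S(G)` is an orbital of `G`,
and a bad overlap in `S(G)` is already one in `G`.

For insolubility, let `K = ⟨f, g⟩` where `f`, `g` carry the bad overlap, and let `(α, δ)` be the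
orbital of `K` containing it. The derived subgroup `K'` has trivial germs at `α`, because right
germs of PL maps at a common fixed point are linear. On the fixed point set of a derived subgroup
`L'` the group `L` acts by commuting maps, so for `g ∈ L` the points fixed by `L'` and fixed
(resp. moved) by `g` form `L`-invariant sets, and a nonempty `L`-invariant set in an orbital of `L`
accumulates at both of its ends. With "moved", this shows that if `L` has orbital `(α, δ)` and
trivial germs at `α` then so does `L'`; with "fixed", it shows that `K'` has orbital `(α, δ)`.
Thus no term of the derived series of `K` is trivial.
-/

section Action

theorem ap_one (x : ℝ) : ap 1 x = x := rfl

theorem ap_mul (g h : PermR) (x : ℝ) : ap (g * h) x = ap h (ap g x) := rfl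

theorem ap_bijective (g : PermR) : Function.Bijective (ap g) := g.unop.bijective

theorem ap_injective (g : PermR) : Function.Injective (ap g) := (ap_bijective g).injective

theorem ap_inv_ap (g : PermR) (x : ℝ) : ap g⁻¹ (ap g x) = x := by
  rw [← ap_mul, mul_inv_cancel, ap_one]

theorem ap_ap_inv (g : PermR) (x : ℝ) : ap g (ap g⁻¹ x) = x := by
  rw [← ap_mul, inv_mul_cancel, ap_one]

theorem ap_inv_eq_self {g : PermR} {x : ℝ} (h : ap g x = x) : ap g⁻¹ x = x := by
  rw [← (ap_injective g).eq_iff, ap_ap_inv, h]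

theorem image_ap_one (J : Set ℝ) : ap 1 '' J = J := image_id J

theorem image_ap_mul (g h : PermR) (J : Set ℝ) : ap (g * h) '' J = ap h '' (ap g '' J) :=
  image_comp (ap h) (ap g) J

theorem notMem_Supp {g : PermR} {x : ℝ} : x ∉ Supp g ↔ ap g x = x := not_not

variable {g : PermR}

theorem strictMono_ap_inv (hg : StrictMono (ap g)) : StrictMono (ap g⁻¹) := fun x y hxy => by
  rwa [← hg.lt_iff_lt, ap_ap_inv, ap_ap_inv]

/-- The order isomorphism of `ℝ` underlying a strictly increasing element of `PermR`. -/
noncomputable def toOrderIso (hg : StrictMono (ap g)) : ℝ ≃o ℝ :=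
  hg.orderIsoOfSurjective _ (ap_bijective g).surjective

theorem continuous_ap (hg : StrictMono (ap g)) : Continuous (ap g) := (toOrderIso hg).continuous

theorem image_ap_Ioo (hg : StrictMono (ap g)) (a b : ℝ) :
    ap g '' Ioo a b = Ioo (ap g a) (ap g b) :=
  (toOrderIso hg).image_Ioo a b

theorem ap_csSup_eq_self (hg : StrictMono (ap g)) {T : Set ℝ} (hT : ap g '' T = T)
    (hne : T.Nonempty) (hbdd : BddAbove T) : ap g (sSup T) = sSup T :=
  ((toOrderIso hg).map_csSup' hne hbdd).trans (congrArg sSup hT)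

theorem ap_csInf_eq_self (hg : StrictMono (ap g)) {T : Set ℝ} (hT : ap g '' T = T)
    (hne : T.Nonempty) (hbdd : BddBelow T) : ap g (sInf T) = sInf T :=
  ((toOrderIso hg).map_csInf' hne hbdd).trans (congrArg sInf hT)

theorem isOpen_Supp (hg : StrictMono (ap g)) : IsOpen (Supp g) :=
  isOpen_ne_fun (continuous_ap hg) continuous_id

/-- `g` is an orientation-preserving homeomorphism of `[0,1]`, extended by the identity to `ℝ`:
this is `IsPL` without the condition on breakpoints. -/
structure IsUnitHomeo (g : PermR) : Prop where
  strictMono : StrictMono (ap g)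
  ap_eq_self : ∀ x ∉ Ioo (0 : ℝ) 1, ap g x = x

theorem IsPL.isUnitHomeo (hg : IsPL g) : IsUnitHomeo g := ⟨hg.1, hg.2.1⟩

theorem IsUnitHomeo.Supp_subset (hg : IsUnitHomeo g) : Supp g ⊆ Ioo 0 1 :=
  fun x hx => not_imp_comm.1 (hg.ap_eq_self x) hx

end Action

section Orbital

theorem eq_and_eq_of_Ioo_eq_Ioo {α : Type*} [LinearOrder α] [DenselyOrdered α] {a b c d : α}
    (hab : a < b) (h : Ioo a b = Ioo c d) : a = c ∧ b = d := by
  have hcd : c < d := nonempty_Ioo.1 (h ▸ nonempty_Ioo.2 hab)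
  have hle := (Ioo_subset_Ioo_iff hab).1 h.subset
  have hge := (Ioo_subset_Ioo_iff hcd).1 h.superset
  exact ⟨hge.1.antisymm hle.1, hle.2.antisymm hge.2⟩

theorem exists_Ioo_subset_of_isOpen {α : Type*} [ConditionallyCompleteLinearOrder α]
    [TopologicalSpace α] [OrderTopology α] {U : Set α} (hU : IsOpen U) {u v x y : α}
    (huv : u ≤ v) (hUuv : Icc u v ⊆ U) (hx : x ∉ U) (hxu : x ≤ u) (hy : y ∉ U) (hvy : v ≤ y) :
    ∃ a b, a ∉ U ∧ b ∉ U ∧ a < u ∧ v < b ∧ Ioo a b ⊆ U := by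
  obtain ⟨a, ⟨haU, hau⟩, ha⟩ : ∃ a, IsGreatest (Uᶜ ∩ Iic u) a :=
    ⟨_, (hU.isClosed_compl.inter isClosed_Iic).isGreatest_csSup ⟨x, hx, hxu⟩
      (bddAbove_Iic.mono inter_subset_right)⟩
  obtain ⟨b, ⟨hbU, hvb⟩, hb⟩ : ∃ b, IsLeast (Uᶜ ∩ Ici v) b :=
    ⟨_, (hU.isClosed_compl.inter isClosed_Ici).isLeast_csInf ⟨y, hy, hvy⟩
      (bddBelow_Ici.mono inter_subset_right)⟩
  have hau' : a ≠ u := fun h => haU (h ▸ hUuv (left_mem_Icc.2 huv))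
  have hvb' : v ≠ b := fun h => hbU (h ▸ hUuv (right_mem_Icc.2 huv))
  refine ⟨a, b, haU, hbU, lt_of_le_of_ne hau hau', lt_of_le_of_ne hvb hvb', fun z hz => ?_⟩
  by_contra hzU
  rcases le_total z u with hzu | huz
  · exact (ha ⟨hzU, hzu⟩).not_gt hz.1
  rcases le_total z v with hzv | hvz
  · exact hzU (hUuv ⟨huz, hzv⟩)
  · exact (hb ⟨hzU, hvz⟩).not_gt hz.2

theorem exists_isOrbital_of_ap_ne {g : PermR} (hg : IsUnitHomeo g) {x : ℝ} (hx : ap g x ≠ x) :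
    ∃ a b, IsOrbital g a b ∧ x ∈ Ioo a b := by
  have hx01 : x ∈ Ioo (0 : ℝ) 1 := hg.Supp_subset hx
  obtain ⟨a, b, ha, hb, hax, hxb, hab⟩ := exists_Ioo_subset_of_isOpen (isOpen_Supp hg.strictMono)
    le_rfl (by simpa [Supp] using hx) (notMem_Supp.2 (hg.ap_eq_self 0 (by simp))) hx01.1.le
    (notMem_Supp.2 (hg.ap_eq_self 1 (by simp))) hx01.2.le
  exact ⟨a, b, ⟨hax.trans hxb, hab, ha, hb⟩, hax, hxb⟩

variable {g : PermR} {a b x : ℝ}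

theorem IsOrbital.ap_left (h : IsOrbital g a b) : ap g a = a := notMem_Supp.1 h.2.2.1

theorem IsOrbital.ap_right (h : IsOrbital g a b) : ap g b = b := notMem_Supp.1 h.2.2.2

theorem IsOrbital.ap_ne (h : IsOrbital g a b) (hx : x ∈ Ioo a b) : ap g x ≠ x := h.2.1 hx

theorem IsOrbital.image_Ioo (h : IsOrbital g a b) (hg : StrictMono (ap g)) :
    ap g '' Ioo a b = Ioo a b := by
  rw [image_ap_Ioo hg, h.ap_left, h.ap_right]

theorem IsOrbital.inv (h : IsOrbital g a b) : IsOrbital g⁻¹ a b := by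
  refine ⟨h.1, fun x hx hfix => h.ap_ne hx ?_, notMem_Supp.2 (ap_inv_eq_self h.ap_left),
    notMem_Supp.2 (ap_inv_eq_self h.ap_right)⟩
  simpa using ap_inv_eq_self hfix

theorem IsOrbital.conj {f : PermR} (h : IsOrbital f a b) (hg : StrictMono (ap g)) :
    IsOrbital (g⁻¹ * f * g) (ap g a) (ap g b) := by
  have ap_conj (x : ℝ) : ap (g⁻¹ * f * g) (ap g x) = ap g (ap f x) := by
    rw [ap_mul, ap_mul, ap_inv_ap]
  refine ⟨hg h.1, ?_, ?_, ?_⟩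
  · rw [← image_ap_Ioo hg]
    rintro _ ⟨x, hx, rfl⟩ hfix
    exact h.ap_ne hx (ap_injective g ((ap_conj x).symm.trans hfix))
  · rw [notMem_Supp, ap_conj, h.ap_left]
  · rw [notMem_Supp, ap_conj, h.ap_right]

theorem IsOrbital.unique {c d : ℝ} (hab : IsOrbital g a b) (hcd : IsOrbital g c d)
    (hxab : x ∈ Ioo a b) (hxcd : x ∈ Ioo c d) : a = c ∧ b = d := by
  refine ⟨le_antisymm ?_ ?_, le_antisymm ?_ ?_⟩ <;> by_contra! hlt
  · exact hcd.ap_ne ⟨hlt, hxab.1.trans hxcd.2⟩ hab.ap_left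
  · exact hab.ap_ne ⟨hlt, hxcd.1.trans hxab.2⟩ hcd.ap_left
  · exact hab.ap_ne ⟨hxab.1.trans hxcd.2, hlt⟩ hcd.ap_right
  · exact hcd.ap_ne ⟨hxcd.1.trans hxab.2, hlt⟩ hab.ap_right

end Orbital

section OneBumpFactor

variable {f k : PermR} {a b : ℝ}

theorem IsOneBumpFactor.image_Ioo (h : IsOneBumpFactor f k a b) (hk : StrictMono (ap k)) :
    ap f '' Ioo a b = Ioo a b :=
  (image_congr h.2.1).trans (h.1.image_Ioo hk)

theorem IsOneBumpFactor.image_of_Ioo_subset (h : IsOneBumpFactor f k a b)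
    (hk : StrictMono (ap k)) {J : Set ℝ} (hJ : Ioo a b ⊆ J) : ap f '' J = J := by
  have hout : ap f '' (J \ Ioo a b) = J \ Ioo a b :=
    (image_congr fun x hx => h.2.2 x hx.2).trans (image_id _)
  rw [← union_sdiff_cancel hJ, image_union, h.image_Ioo hk, hout]

theorem IsOneBumpFactor.inv (h : IsOneBumpFactor f k a b) (hk : StrictMono (ap k)) :
    IsOneBumpFactor f⁻¹ k⁻¹ a b := by
  refine ⟨h.1.inv, fun x hx => ?_, fun x hx => ap_inv_eq_self (h.2.2 x hx)⟩
  obtain ⟨y, hy, rfl⟩ := (h.image_Ioo hk).superset hx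
  rw [ap_inv_ap, h.2.1 y hy, ap_inv_ap]

theorem IsOneBumpFactor.strictMono (h : IsOneBumpFactor f k a b) (hk : StrictMono (ap k)) :
    StrictMono (ap f) := by
  have maps : ∀ x ∈ Ioo a b, ap f x ∈ Ioo a b := mapsTo_iff_image_subset.2 (h.image_Ioo hk).subset
  intro x y hxy
  by_cases hx : x ∈ Ioo a b <;> by_cases hy : y ∈ Ioo a b
  · rw [h.2.1 x hx, h.2.1 y hy]
    exact hk hxy
  · have hby : b ≤ y := not_lt.1 fun hyb => hy ⟨hx.1.trans hxy, hyb⟩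
    rw [h.2.2 y hy]
    exact (maps x hx).2.trans_le hby
  · have hxa : x ≤ a := not_lt.1 fun hax => hx ⟨hax, hxy.trans hy.2⟩
    rw [h.2.2 x hx]
    exact hxa.trans_lt (maps y hy).1
  · rwa [h.2.2 x hx, h.2.2 y hy]

theorem strictMono_of_mem_SplitGroup {G : Subgroup PermR} (hG : ∀ g ∈ G, StrictMono (ap g))
    {h : PermR} (hh : h ∈ SplitGroup G) : StrictMono (ap h) := by
  induction hh using Subgroup.closure_induction with
  | mem f hf =>
    obtain ⟨k, hk, a, b, hfactor⟩ := hf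
    exact hfactor.strictMono (hG k hk)
  | one => exact strictMono_id
  | mul _ _ _ _ hx hy => exact hy.comp hx
  | inv _ _ hx => exact strictMono_ap_inv hx

end OneBumpFactor

section NoBadOverlap

/-- The set of all orbitals of elements of `G`, as subsets of `ℝ`. -/
def Orbitals (G : Subgroup PermR) : Set (Set ℝ) :=
  {A | ∃ g ∈ G, ∃ a b, IsOrbital g a b ∧ A = Ioo a b}

variable {G : Subgroup PermR}

theorem IsOrbital.mem_Orbitals {g : PermR} {a b : ℝ} (h : IsOrbital g a b) (hg : g ∈ G) :
    Ioo a b ∈ Orbitals G :=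
  ⟨g, hg, a, b, h, rfl⟩

theorem image_mem_Orbitals {A : Set ℝ} (hA : A ∈ Orbitals G) {g : PermR} (hg : g ∈ G)
    (hmono : StrictMono (ap g)) : ap g '' A ∈ Orbitals G := by
  obtain ⟨f, hf, a, b, hfab, rfl⟩ := hA
  rw [image_ap_Ioo hmono]
  exact (hfab.conj hmono).mem_Orbitals (mul_mem (mul_mem (inv_mem hg) hf) hg)

theorem eq_or_strictly_nested (hN : ¬ AdmitsBadOverlap G) {f g : PermR} (hf : f ∈ G) (hg : g ∈ G)
    {a b c d : ℝ} (hfab : IsOrbital f a b) (hgcd : IsOrbital g c d)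
    (hne : (Ioo a b ∩ Ioo c d).Nonempty) :
    (a = c ∧ b = d) ∨ (c < a ∧ b < d) ∨ (a < c ∧ d < b) := by
  by_contra! h
  refine hN ⟨f, hf, g, hg, a, b, c, d, hfab, hgcd, hne, fun heq => ?_, ?_, ?_⟩
  · obtain ⟨hac, hbd⟩ := eq_and_eq_of_Ioo_eq_Ioo hfab.1 heq
    exact h.1 hac hbd
  · rw [Icc_subset_Ioo_iff hfab.1.le, not_and, not_lt]
    exact h.2.1
  · rw [Icc_subset_Ioo_iff hgcd.1.le, not_and, not_lt]
    exact h.2.2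

theorem subset_or_subset_of_mem_Orbitals (hN : ¬ AdmitsBadOverlap G) {A B : Set ℝ}
    (hA : A ∈ Orbitals G) (hB : B ∈ Orbitals G) (hne : (A ∩ B).Nonempty) : A ⊆ B ∨ B ⊆ A := by
  obtain ⟨f, hf, a, b, hfab, rfl⟩ := hA
  obtain ⟨g, hg, c, d, hgcd, rfl⟩ := hB
  rcases eq_or_strictly_nested hN hf hg hfab hgcd hne with ⟨rfl, rfl⟩ | ⟨hca, hbd⟩ | ⟨hac, hdb⟩
  · exact Or.inl Subset.rfl
  · exact Or.inl (Ioo_subset_Ioo hca.le hbd.le)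
  · exact Or.inr (Ioo_subset_Ioo hac.le hdb.le)

theorem IsOrbital.ap_ends_of_image_inter_nonempty (hG : ∀ g ∈ G, IsUnitHomeo g)
    (hN : ¬ AdmitsBadOverlap G) {f g : PermR} (hf : f ∈ G) (hg : g ∈ G) {a b : ℝ}
    (h : IsOrbital f a b) (hne : (ap g '' Ioo a b ∩ Ioo a b).Nonempty) :
    ap g a = a ∧ ap g b = b := by
  have hmono := (hG g hg).strictMono
  have hcont : ContinuousOn (ap g) (uIcc a b) := (continuous_ap hmono).continuousOn
  rw [image_ap_Ioo hmono] at hne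
  by_contra hends
  obtain ⟨hga, z, hz, hgz⟩ : ap g a ≠ a ∧ ∃ z ∈ uIcc a b, ap g z = z := by
    rcases eq_or_strictly_nested hN (mul_mem (mul_mem (inv_mem hg) hf) hg) hf (h.conj hmono) h hne
      with hfix | ⟨ha, hb⟩ | ⟨ha, hb⟩
    · exact absurd hfix hends
    · exact ⟨ha.ne', exists_mem_uIcc_isFixedPt hcont ha.le hb.le⟩
    · rw [uIcc_comm] at hcont ⊢
      exact ⟨ha.ne, exists_mem_uIcc_isFixedPt hcont hb.le ha.le⟩
  rw [uIcc_of_le h.1.le] at hz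
  obtain ⟨l, e, hgle, hla, hae⟩ := exists_isOrbital_of_ap_ne (hG g hg) hga
  have hez : e ≤ z := not_lt.1 fun hze => hgle.ap_ne ⟨hla.trans_le hz.1, hze⟩ hgz
  obtain ⟨w, haw, hwe⟩ := exists_between hae
  have hmeet : (Ioo l e ∩ Ioo a b).Nonempty :=
    ⟨w, ⟨hla.trans haw, hwe⟩, haw, hwe.trans_le (hez.trans hz.2)⟩
  rcases eq_or_strictly_nested hN hg hf hgle h hmeet with ⟨heq, -⟩ | ⟨hal, -⟩ | ⟨-, hbe⟩
  · exact hla.ne heq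
  · exact hla.not_gt hal
  · exact (hez.trans hz.2).not_gt hbe

theorem image_eq_of_image_inter_nonempty (hG : ∀ g ∈ G, IsUnitHomeo g)
    (hN : ¬ AdmitsBadOverlap G) {A : Set ℝ} (hA : A ∈ Orbitals G) {g : PermR} (hg : g ∈ G)
    (hne : (ap g '' A ∩ A).Nonempty) : ap g '' A = A := by
  obtain ⟨f, hf, a, b, hfab, rfl⟩ := hA
  obtain ⟨ha, hb⟩ := hfab.ap_ends_of_image_inter_nonempty hG hN hf hg hne
  rw [image_ap_Ioo (hG g hg).strictMono, ha, hb]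

theorem disjoint_image_of_ssubset_orbital (hG : ∀ g ∈ G, IsUnitHomeo g)
    (hN : ¬ AdmitsBadOverlap G) {A : Set ℝ} (hA : A ∈ Orbitals G) {g : PermR} (hg : g ∈ G)
    {l e : ℝ} (hgle : IsOrbital g l e) (hssub : A ⊂ Ioo l e) : Disjoint (ap g '' A) A := by
  by_contra hmeet
  rw [not_disjoint_iff_nonempty_inter] at hmeet
  obtain ⟨f, hf, a, b, hfab, rfl⟩ := hA
  obtain ⟨ha, hb⟩ := hfab.ap_ends_of_image_inter_nonempty hG hN hf hg hmeet
  obtain ⟨hla, hbe⟩ := (Ioo_subset_Ioo_iff hfab.1).1 hssub.subset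
  rcases hla.eq_or_lt with rfl | hla
  · rcases hbe.eq_or_lt with rfl | hbe
    · exact hssub.ne rfl
    · exact hgle.ap_ne ⟨hfab.1, hbe⟩ hb
  · exact hgle.ap_ne ⟨hla, hfab.1.trans_le hbe⟩ ha

/-- No orbital of `G` straddles `J`: those meeting `J` are contained in `J` or contain `J`. Every
intersection of orbitals has this property if `G` has no bad overlap. -/
def IsCompatible (G : Subgroup PermR) (J : Set ℝ) : Prop :=
  ∀ C ∈ Orbitals G, (C ∩ J).Nonempty → C ⊆ J ∨ J ⊆ C

theorem isCompatible_sInter (hN : ¬ AdmitsBadOverlap G) {D : Set (Set ℝ)} (hD : D ⊆ Orbitals G) :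
    IsCompatible G (⋂₀ D) := by
  rintro C hC ⟨y, hyC, hyD⟩
  by_cases hsub : ∃ B ∈ D, B ⊆ C
  · obtain ⟨B, hB, hBC⟩ := hsub
    exact Or.inr ((sInter_subset_of_mem hB).trans hBC)
  · push Not at hsub
    exact Or.inl <| subset_sInter fun B hB =>
      (subset_or_subset_of_mem_Orbitals hN hC (hD hB) ⟨y, hyC, hyD B hB⟩).resolve_right (hsub B hB)

theorem isCompatible_of_mem_Orbitals (hN : ¬ AdmitsBadOverlap G) {A : Set ℝ}
    (hA : A ∈ Orbitals G) : IsCompatible G A :=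
  fun _ hC hne => subset_or_subset_of_mem_Orbitals hN hC hA hne

theorem IsCompatible.image {J : Set ℝ} (hJ : IsCompatible G J) {g : PermR} (hg : g ∈ G)
    (hmono : StrictMono (ap g)) : IsCompatible G (ap g '' J) := by
  rintro C hC ⟨_, hxC, x, hxJ, rfl⟩
  have hpull := hJ (ap g⁻¹ '' C) (image_mem_Orbitals hC (inv_mem hg) (strictMono_ap_inv hmono))
    ⟨x, ⟨ap g x, hxC, ap_inv_ap g x⟩, hxJ⟩
  rw [← Function.LeftInverse.image_image (ap_ap_inv g) C]
  exact hpull.imp image_mono image_mono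

/-- `x` and `y` coincide or lie in a common orbital of `G` properly contained in `J`. This is how
points are identified when `J` is seen modulo its proper suborbitals. -/
def Linked (G : Subgroup PermR) (J : Set ℝ) (x y : ℝ) : Prop :=
  x = y ∨ ∃ C ∈ Orbitals G, C ⊂ J ∧ x ∈ C ∧ y ∈ C

theorem Linked.trans (hN : ¬ AdmitsBadOverlap G) {J : Set ℝ} {x y z : ℝ} (hxy : Linked G J x y)
    (hyz : Linked G J y z) : Linked G J x z := by
  rcases hxy with rfl | ⟨C, hC, hCJ, hxC, hyC⟩
  · exact hyz
  rcases hyz with rfl | ⟨D, hD, hDJ, hyD, hzD⟩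
  · exact Or.inr ⟨C, hC, hCJ, hxC, hyC⟩
  rcases subset_or_subset_of_mem_Orbitals hN hC hD ⟨y, hyC, hyD⟩ with hCD | hDC
  · exact Or.inr ⟨D, hD, hDJ, hCD hxC, hzD⟩
  · exact Or.inr ⟨C, hC, hCJ, hxC, hDC hzD⟩

theorem Linked.image {J : Set ℝ} {x y : ℝ} (hxy : Linked G J x y) {g : PermR} (hg : g ∈ G)
    (hmono : StrictMono (ap g)) : Linked G (ap g '' J) (ap g x) (ap g y) := by
  rcases hxy with rfl | ⟨C, hC, hCJ, hxC, hyC⟩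
  · exact Or.inl rfl
  · exact Or.inr ⟨ap g '' C, image_mem_Orbitals hC hg hmono,
      (ap_injective g).image_strictMono hCJ, mem_image_of_mem _ hxC, mem_image_of_mem _ hyC⟩

/-- On `J`, the map `h` agrees with `g` up to moving points inside orbitals of `G` that are
properly contained in the image of `J`. -/
structure AgreesModSuborbitals (G : Subgroup PermR) (J : Set ℝ) (g h : PermR) : Prop where
  image_eq : ap h '' J = ap g '' J
  linked : ∀ x ∈ J, Linked G (ap g '' J) (ap g x) (ap h x)

theorem AgreesModSuborbitals.of_eqOn {J : Set ℝ} {g h : PermR} (heq : EqOn (ap h) (ap g) J) :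
    AgreesModSuborbitals G J g h :=
  ⟨heq.image_eq, fun _ hx => Or.inl (heq hx).symm⟩

theorem AgreesModSuborbitals.mul (hN : ¬ AdmitsBadOverlap G) {J : Set ℝ} {g₁ g₂ h₁ h₂ : PermR}
    (hg₂ : g₂ ∈ G) (hmono : StrictMono (ap g₂)) (h₁_agrees : AgreesModSuborbitals G J g₁ h₁)
    (h₂_agrees : AgreesModSuborbitals G (ap g₁ '' J) g₂ h₂) :
    AgreesModSuborbitals G J (g₁ * g₂) (h₁ * h₂) where
  image_eq := by rw [image_ap_mul, image_ap_mul, h₁_agrees.image_eq, h₂_agrees.image_eq]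
  linked x hx := by
    have hh₁x : ap h₁ x ∈ ap g₁ '' J := h₁_agrees.image_eq ▸ mem_image_of_mem _ hx
    rw [image_ap_mul, ap_mul, ap_mul]
    exact ((h₁_agrees.linked x hx).image hg₂ hmono).trans hN (h₂_agrees.linked _ hh₁x)

theorem IsOneBumpFactor.agreesModSuborbitals_one {f k : PermR} {a b : ℝ}
    (h : IsOneBumpFactor f k a b) (hk : k ∈ G) (hmono : StrictMono (ap k)) {J : Set ℝ}
    (hJ : Ioo a b ⊂ J) : AgreesModSuborbitals G J 1 f where
  image_eq := (h.image_of_Ioo_subset hmono hJ.subset).trans (image_ap_one J).symm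
  linked x _ := by
    rw [image_ap_one, ap_one]
    by_cases hx : x ∈ Ioo a b
    · exact Or.inr ⟨Ioo a b, h.1.mem_Orbitals hk, hJ, hx,
        h.image_Ioo hmono ▸ mem_image_of_mem _ hx⟩
    · exact Or.inl (h.2.2 x hx).symm

/-- On every compatible set, `h` agrees with an element of `G` modulo proper suborbitals. -/
def IsApproximable (G : Subgroup PermR) (h : PermR) : Prop :=
  ∀ J, IsCompatible G J → ∃ g ∈ G, AgreesModSuborbitals G J g h

theorem IsApproximable.one : IsApproximable G 1 :=
  fun J _ => ⟨1, one_mem G, .of_eqOn (eqOn_refl _ J)⟩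

theorem IsApproximable.mul (hG : ∀ g ∈ G, StrictMono (ap g)) (hN : ¬ AdmitsBadOverlap G)
    {h₁ h₂ : PermR} (hh₁ : IsApproximable G h₁) (hh₂ : IsApproximable G h₂) :
    IsApproximable G (h₁ * h₂) := by
  intro J hJ
  obtain ⟨g₁, hg₁, hagree₁⟩ := hh₁ J hJ
  obtain ⟨g₂, hg₂, hagree₂⟩ := hh₂ (ap g₁ '' J) (hJ.image hg₁ (hG g₁ hg₁))
  exact ⟨g₁ * g₂, mul_mem hg₁ hg₂, hagree₁.mul hN hg₂ (hG g₂ hg₂) hagree₂⟩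

theorem IsOneBumpFactor.isApproximable {f k : PermR} {a b : ℝ} (h : IsOneBumpFactor f k a b)
    (hk : k ∈ G) (hmono : StrictMono (ap k)) : IsApproximable G f := by
  intro J hJ
  by_cases hne : (Ioo a b ∩ J).Nonempty
  · by_cases hsub : J ⊆ Ioo a b
    · exact ⟨k, hk, .of_eqOn fun x hx => h.2.1 x (hsub hx)⟩
    · have hsub' := (hJ _ (h.1.mem_Orbitals hk) hne).resolve_right hsub
      exact ⟨1, one_mem G, h.agreesModSuborbitals_one hk hmono ⟨hsub', hsub⟩⟩
  · exact ⟨1, one_mem G, .of_eqOn fun x hx => h.2.2 x fun hxab => hne ⟨x, hxab, hx⟩⟩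

theorem isApproximable_of_mem_SplitGroup (hG : ∀ g ∈ G, StrictMono (ap g))
    (hN : ¬ AdmitsBadOverlap G) {h : PermR} (hh : h ∈ SplitGroup G) : IsApproximable G h := by
  induction hh using Subgroup.closure_induction'' with
  | mem f hf =>
    obtain ⟨k, hk, a, b, hfactor⟩ := hf
    exact hfactor.isApproximable hk (hG k hk)
  | inv_mem f hf =>
    obtain ⟨k, hk, a, b, hfactor⟩ := hf
    exact (hfactor.inv (hG k hk)).isApproximable (inv_mem hk) (strictMono_ap_inv (hG k hk))
  | one => exact .one
  | mul _ _ _ _ hx hy => exact hx.mul hG hN hy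

theorem IsApproximable.image_eq_of_image_inter_nonempty (hG : ∀ g ∈ G, IsUnitHomeo g)
    (hN : ¬ AdmitsBadOverlap G) {h : PermR} (hh : IsApproximable G h) {A : Set ℝ}
    (hA : A ∈ Orbitals G) (hne : (ap h '' A ∩ A).Nonempty) : ap h '' A = A := by
  obtain ⟨g, hg, hagree⟩ := hh A (isCompatible_of_mem_Orbitals hN hA)
  rw [hagree.image_eq] at hne ⊢
  exact PLPaper.image_eq_of_image_inter_nonempty hG hN hA hg hne

theorem exists_isOrbital_of_linked_of_not_linked (hG : ∀ g ∈ G, IsUnitHomeo g)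
    (hN : ¬ AdmitsBadOverlap G) {g : PermR} (hg : g ∈ G) {J : Set ℝ} {x y : ℝ}
    (hlinked : Linked G J (ap g x) y) (hnot : ¬ Linked G J x y) :
    ∃ l e, IsOrbital g l e ∧ x ∈ Ioo l e ∧ y ∈ Ioo l e := by
  have hgx : ap g x ≠ x := by
    intro hfix
    rw [hfix] at hlinked
    exact hnot hlinked
  obtain ⟨l, e, hgle, hx⟩ := exists_isOrbital_of_ap_ne (hG g hg) hgx
  have hgxle : ap g x ∈ Ioo l e :=
    hgle.image_Ioo (hG g hg).strictMono ▸ mem_image_of_mem _ hx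
  refine ⟨l, e, hgle, hx, ?_⟩
  rcases hlinked with rfl | ⟨C, hC, hCJ, hgxC, hyC⟩
  · exact hgxle
  rcases subset_or_subset_of_mem_Orbitals hN hC (hgle.mem_Orbitals hg) ⟨_, hgxC, hgxle⟩
    with hsub | hsub
  · exact hsub hyC
  · exact absurd (Or.inr ⟨C, hC, hCJ, hsub hx, hyC⟩) hnot

theorem IsApproximable.exists_agreesModSuborbitals_orbital (hG : ∀ g ∈ G, IsUnitHomeo g)
    (hN : ¬ AdmitsBadOverlap G) {h : PermR} (hh : IsApproximable G h) {x : ℝ} (hx : ap h x ≠ x) :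
    ∃ g ∈ G, ∃ l e, IsOrbital g l e ∧ x ∈ Ioo l e ∧
      AgreesModSuborbitals G (Ioo l e) g h := by
  set D : Set (Set ℝ) := {B ∈ Orbitals G | x ∈ B ∧ ap h x ∈ B}
  have hxD : x ∈ ⋂₀ D := fun B hB => hB.2.1
  have hhD : ap h '' ⋂₀ D = ⋂₀ D := by
    simp only [sInter_eq_biInter, image_iInter₂ (ap_bijective h)]
    exact iInter₂_congr fun B hB => hh.image_eq_of_image_inter_nonempty hG hN hB.1
      ⟨ap h x, mem_image_of_mem _ hB.2.1, hB.2.2⟩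
  have hnot : ¬ Linked G (⋂₀ D) x (ap h x) := by
    rintro (heq | ⟨C, hC, hCD, hxC, hhxC⟩)
    · exact hx heq.symm
    · exact hCD.not_subset (sInter_subset_of_mem ⟨hC, hxC, hhxC⟩)
  obtain ⟨g, hg, hagree⟩ := hh (⋂₀ D) (isCompatible_sInter hN fun B hB => hB.1)
  have hgD : ap g '' ⋂₀ D = ⋂₀ D := hagree.image_eq.symm.trans hhD
  have hlinked : Linked G (⋂₀ D) (ap g x) (ap h x) := hgD ▸ hagree.linked x hxD
  obtain ⟨l, e, hgle, hxle, hhxle⟩ :=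
    exists_isOrbital_of_linked_of_not_linked hG hN hg hlinked hnot
  have hle_mem : Ioo l e ∈ D := ⟨hgle.mem_Orbitals hg, hxle, hhxle⟩
  have hle_sub : Ioo l e ⊆ ⋂₀ D := subset_sInter fun B hB => by
    by_contra hnsub
    have hssub : B ⊂ Ioo l e := ⟨(subset_or_subset_of_mem_Orbitals hN hB.1 (hgle.mem_Orbitals hg)
      ⟨x, hB.2.1, hxle⟩).resolve_right hnsub, hnsub⟩
    have hgxB : ap g x ∈ B := (hgD ▸ mem_image_of_mem _ hxD : ap g x ∈ ⋂₀ D) B hB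
    exact (disjoint_image_of_ssubset_orbital hG hN hB.1 hg hgle hssub).notMem_of_mem_left
      (mem_image_of_mem _ hB.2.1) hgxB
  exact ⟨g, hg, l, e, hgle, hxle, hle_sub.antisymm (sInter_subset_of_mem hle_mem) ▸ hagree⟩

theorem AgreesModSuborbitals.isOrbital (hG : ∀ g ∈ G, IsUnitHomeo g) (hN : ¬ AdmitsBadOverlap G)
    {g h : PermR} (hg : g ∈ G) (hh : StrictMono (ap h)) {l e : ℝ} (hgle : IsOrbital g l e)
    (hagree : AgreesModSuborbitals G (Ioo l e) g h) : IsOrbital h l e := by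
  have himage := hgle.image_Ioo (hG g hg).strictMono
  obtain ⟨hl, he⟩ : ap h l = l ∧ ap h e = e := by
    refine eq_and_eq_of_Ioo_eq_Ioo (hh hgle.1) ?_
    rw [← image_ap_Ioo hh, hagree.image_eq, himage]
  refine ⟨hgle.1, fun y hy hfix => ?_, notMem_Supp.2 hl, notMem_Supp.2 he⟩
  have hlinked := hagree.linked y hy
  rw [himage, hfix] at hlinked
  rcases hlinked with heq | ⟨C, hC, hssub, hgyC, hyC⟩
  · exact hgle.ap_ne hy heq
  · exact (disjoint_image_of_ssubset_orbital hG hN hC hg hgle hssub).notMem_of_mem_left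
      (mem_image_of_mem _ hyC) hgyC

theorem IsOrbital.exists_of_mem_SplitGroup (hG : ∀ g ∈ G, IsUnitHomeo g)
    (hN : ¬ AdmitsBadOverlap G) {h : PermR} (hh : h ∈ SplitGroup G) {p q : ℝ}
    (hpq : IsOrbital h p q) : ∃ g ∈ G, IsOrbital g p q := by
  have hmono : ∀ g ∈ G, StrictMono (ap g) := fun g hg => (hG g hg).strictMono
  obtain ⟨x, hx⟩ := exists_between hpq.1
  obtain ⟨g, hg, l, e, hgle, hxle, hagree⟩ := (isApproximable_of_mem_SplitGroup hmono hN hh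
    ).exists_agreesModSuborbitals_orbital hG hN (hpq.ap_ne hx)
  have hhle := hagree.isOrbital hG hN hg (strictMono_of_mem_SplitGroup hmono hh) hgle
  obtain ⟨rfl, rfl⟩ := hpq.unique hhle hx hxle
  exact ⟨g, hg, hgle⟩

theorem AdmitsBadOverlap.mono {H : Subgroup PermR} (hGH : G ≤ H) (h : AdmitsBadOverlap G) :
    AdmitsBadOverlap H := by
  obtain ⟨f, hf, g, hg, hoverlap⟩ := h
  exact ⟨f, hGH hf, g, hGH hg, hoverlap⟩

theorem AdmitsBadOverlap.of_SplitGroup (hG : ∀ g ∈ G, IsUnitHomeo g)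
    (h : AdmitsBadOverlap (SplitGroup G)) : AdmitsBadOverlap G := by
  by_contra hN
  obtain ⟨f, hf, g, hg, a, b, c, d, hfab, hgcd, hoverlap⟩ := h
  obtain ⟨f', hf', hf'ab⟩ := hfab.exists_of_mem_SplitGroup hG hN hf
  obtain ⟨g', hg', hg'cd⟩ := hgcd.exists_of_mem_SplitGroup hG hN hg
  exact hN ⟨f', hf', g', hg', a, b, c, d, hf'ab, hg'cd, hoverlap⟩

end NoBadOverlap

section GroupOrbital

variable {K L : Subgroup PermR} {g : PermR} {T : Set ℝ} {α δ : ℝ}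

theorem notMem_GSupp {x : ℝ} : x ∉ GSupp K ↔ ∀ g ∈ K, ap g x = x := by
  simp [GSupp, Supp]

theorem GSupp_mono (hLK : L ≤ K) : GSupp L ⊆ GSupp K := biUnion_subset_biUnion_left hLK

theorem isOpen_GSupp (hK : ∀ g ∈ K, StrictMono (ap g)) : IsOpen (GSupp K) :=
  isOpen_biUnion fun g hg => isOpen_Supp (hK g hg)

theorem GSupp_closure (S : Set PermR) : GSupp (Subgroup.closure S) = ⋃ g ∈ S, Supp g := by
  refine Subset.antisymm (fun x => ?_) (biUnion_subset_biUnion_left Subgroup.subset_closure)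
  contrapose!
  intro hx
  have hfix : ∀ g ∈ S, ap g x = x := by simpa [Supp] using hx
  refine notMem_GSupp.2 fun g hg => ?_
  induction hg using Subgroup.closure_induction with
  | mem g hg => exact hfix g hg
  | one => exact ap_one x
  | mul g h _ _ hg hh => rw [ap_mul, hg, hh]
  | inv g _ hg => exact ap_inv_eq_self hg

theorem exists_isGroupOrbital (hK : ∀ g ∈ K, IsUnitHomeo g) {u v : ℝ} (huv : u ≤ v)
    (hsub : Icc u v ⊆ GSupp K) : ∃ α δ, IsGroupOrbital K α δ ∧ Icc u v ⊆ Ioo α δ := by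
  have hGSupp : GSupp K ⊆ Ioo 0 1 := iUnion₂_subset fun g hg => (hK g hg).Supp_subset
  have hu : u ∈ Ioo (0 : ℝ) 1 := hGSupp (hsub (left_mem_Icc.2 huv))
  have hv : v ∈ Ioo (0 : ℝ) 1 := hGSupp (hsub (right_mem_Icc.2 huv))
  obtain ⟨α, δ, hα, hδ, hαu, hvδ, hαδ⟩ :=
    exists_Ioo_subset_of_isOpen (isOpen_GSupp fun g hg => (hK g hg).strictMono) huv hsub
      (fun h => (hGSupp h).1.false) hu.1.le (fun h => (hGSupp h).2.false) hv.2.le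
  exact ⟨α, δ, ⟨hαu.trans_le (huv.trans hvδ.le), hαδ, hα, hδ⟩, Icc_subset_Ioo hαu hvδ⟩

theorem IsGroupOrbital.ap_left (h : IsGroupOrbital K α δ) (hg : g ∈ K) : ap g α = α :=
  notMem_GSupp.1 h.2.2.1 g hg

theorem IsGroupOrbital.ap_right (h : IsGroupOrbital K α δ) (hg : g ∈ K) : ap g δ = δ :=
  notMem_GSupp.1 h.2.2.2 g hg

theorem IsGroupOrbital.of_le (h : IsGroupOrbital K α δ) (hLK : L ≤ K)
    (hsub : Ioo α δ ⊆ GSupp L) : IsGroupOrbital L α δ :=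
  ⟨h.1, hsub, fun hα => h.2.2.1 (GSupp_mono hLK hα), fun hδ => h.2.2.2 (GSupp_mono hLK hδ)⟩

/-- The set `T` is mapped into itself by every element of the group `K`. -/
def IsInvariant (K : Subgroup PermR) (T : Set ℝ) : Prop := ∀ k ∈ K, MapsTo (ap k) T T

theorem IsInvariant.image_eq (hT : IsInvariant K T) (hg : g ∈ K) : ap g '' T = T :=
  (hT g hg).image_subset.antisymm fun x hx => ⟨ap g⁻¹ x, hT _ (inv_mem hg) hx, ap_ap_inv g x⟩

theorem IsInvariant.inter {S : Set ℝ} (hS : IsInvariant K S) (hT : IsInvariant K T) :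
    IsInvariant K (S ∩ T) :=
  fun k hk => (hS k hk).inter_inter (hT k hk)

theorem IsGroupOrbital.isInvariant (h : IsGroupOrbital K α δ)
    (hK : ∀ g ∈ K, StrictMono (ap g)) : IsInvariant K (Ioo α δ) := fun k hk _ hx =>
  ⟨h.ap_left hk ▸ hK k hk hx.1, (hK k hk hx.2).trans_eq (h.ap_right hk)⟩

theorem IsGroupOrbital.exists_mem_lt (h : IsGroupOrbital K α δ)
    (hK : ∀ g ∈ K, StrictMono (ap g)) (hT : IsInvariant K T) (hne : (T ∩ Ioo α δ).Nonempty)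
    {e : ℝ} (he : α < e) : ∃ t ∈ T, t ∈ Ioo α δ ∧ t < e := by
  by_contra! hle
  have hbdd : BddBelow (T ∩ Ioo α δ) := ⟨e, fun t ht => hle t ht.1 ht.2⟩
  have hmem : sInf (T ∩ Ioo α δ) ∈ Ioo α δ := by
    refine ⟨he.trans_le (le_csInf hne fun t ht => hle t ht.1 ht.2), ?_⟩
    obtain ⟨t, ht⟩ := hne
    exact (csInf_le hbdd ht).trans_lt ht.2.2
  exact notMem_GSupp.2 (fun k hk => ap_csInf_eq_self (hK k hk)
    ((hT.inter (h.isInvariant hK)).image_eq hk) hne hbdd) (h.2.1 hmem)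

theorem IsGroupOrbital.exists_mem_gt (h : IsGroupOrbital K α δ)
    (hK : ∀ g ∈ K, StrictMono (ap g)) (hT : IsInvariant K T) (hne : (T ∩ Ioo α δ).Nonempty)
    {e : ℝ} (he : e < δ) : ∃ t ∈ T, t ∈ Ioo α δ ∧ e < t := by
  by_contra! hle
  have hbdd : BddAbove (T ∩ Ioo α δ) := ⟨e, fun t ht => hle t ht.1 ht.2⟩
  have hmem : sSup (T ∩ Ioo α δ) ∈ Ioo α δ := by
    refine ⟨?_, (csSup_le hne fun t ht => hle t ht.1 ht.2).trans_lt he⟩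
    obtain ⟨t, ht⟩ := hne
    exact ht.2.1.trans_le (le_csSup hbdd ht)
  exact notMem_GSupp.2 (fun k hk => ap_csSup_eq_self (hK k hk)
    ((hT.inter (h.isInvariant hK)).image_eq hk) hne hbdd) (h.2.1 hmem)

theorem exists_ap_eq_self_mem_uIcc (hg : StrictMono (ap g)) (hT : IsClosed T)
    (himage : ap g '' T = T) {x z : ℝ} (hx : x ∈ T) (hz : ap g z = z) :
    ∃ s ∈ T, s ∈ uIcc x z ∧ ap g s = s := by
  rcases le_total x z with hxz | hzx
  · have hne : (T ∩ Iic z).Nonempty := ⟨x, hx, hxz⟩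
    have hbdd : BddAbove (T ∩ Iic z) := bddAbove_Iic.mono inter_subset_right
    have himage' : ap g '' (T ∩ Iic z) = T ∩ Iic z := by
      have hIic : ap g '' Iic z = Iic (ap g z) := (toOrderIso hg).image_Iic z
      rw [image_inter (ap_injective g), himage, hIic, hz]
    have hmem := (hT.inter isClosed_Iic).csSup_mem hne hbdd
    refine ⟨_, hmem.1, ?_, ap_csSup_eq_self hg himage' hne hbdd⟩
    rw [uIcc_of_le hxz]
    exact ⟨le_csSup hbdd ⟨hx, hxz⟩, hmem.2⟩
  · have hne : (T ∩ Ici z).Nonempty := ⟨x, hx, hzx⟩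
    have hbdd : BddBelow (T ∩ Ici z) := bddBelow_Ici.mono inter_subset_right
    have himage' : ap g '' (T ∩ Ici z) = T ∩ Ici z := by
      have hIci : ap g '' Ici z = Ici (ap g z) := (toOrderIso hg).image_Ici z
      rw [image_inter (ap_injective g), himage, hIci, hz]
    have hmem := (hT.inter isClosed_Ici).csInf_mem hne hbdd
    refine ⟨_, hmem.1, ?_, ap_csInf_eq_self hg himage' hne hbdd⟩
    rw [uIcc_of_ge hzx]
    exact ⟨hmem.2, csInf_le hbdd ⟨hx, hzx⟩⟩

theorem IsInvariant.exists_ap_eq_self (hT : IsInvariant K T) (hclosed : IsClosed T)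
    (hg : g ∈ K) (hmono : StrictMono (ap g)) (hne : (T ∩ Ioo α δ).Nonempty) {z : ℝ}
    (hz : z ∈ Ioo α δ) (hgz : ap g z = z) : ((T \ Supp g) ∩ Ioo α δ).Nonempty := by
  obtain ⟨x, hxT, hx⟩ := hne
  obtain ⟨s, hsT, hs, hgs⟩ :=
    exists_ap_eq_self_mem_uIcc hmono hclosed (hT.image_eq hg) hxT hgz
  exact ⟨s, ⟨hsT, notMem_Supp.2 hgs⟩, ordConnected_Ioo.uIcc_subset hx hz hs⟩

end GroupOrbital

section Commutator

open scoped commutatorElement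

variable {K : Subgroup PermR} {f g h : PermR} {α δ : ℝ}

theorem ap_commutatorElement_eq_self_iff {x : ℝ} :
    ap ⁅g, h⁆ x = x ↔ ap h (ap g x) = ap g (ap h x) := by
  rw [commutatorElement_def, ap_mul, ap_mul, ap_mul, ← (ap_injective h).eq_iff,
    ← (ap_injective g).eq_iff, ap_ap_inv, ap_ap_inv]

theorem ap_comm_of_notMem_GSupp_commutator (hg : g ∈ K) (hh : h ∈ K) {x : ℝ}
    (hx : x ∉ GSupp ⁅K, K⁆) : ap h (ap g x) = ap g (ap h x) :=
  ap_commutatorElement_eq_self_iff.1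
    (notMem_GSupp.1 hx _ (Subgroup.commutator_mem_commutator hg hh))

theorem isInvariant_compl_GSupp_commutator (K : Subgroup PermR) :
    IsInvariant K (GSupp ⁅K, K⁆)ᶜ := fun k hk x hx => notMem_GSupp.2 fun c hc => by
  rw [ap_comm_of_notMem_GSupp_commutator hk (Subgroup.commutator_le_self K hc) hx,
    notMem_GSupp.1 hx c hc]

theorem isInvariant_compl_GSupp_commutator_inter_Supp (hg : g ∈ K) :
    IsInvariant K ((GSupp ⁅K, K⁆)ᶜ ∩ Supp g) := fun k hk _ ⟨hx, hgx⟩ => by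
  refine ⟨isInvariant_compl_GSupp_commutator K k hk hx, fun hfix => hgx ?_⟩
  rwa [ap_comm_of_notMem_GSupp_commutator hk hg hx, (ap_injective k).eq_iff] at hfix

theorem isInvariant_compl_GSupp_commutator_sdiff_Supp (hg : g ∈ K) :
    IsInvariant K ((GSupp ⁅K, K⁆)ᶜ \ Supp g) := fun k hk _ ⟨hx, hgx⟩ => by
  refine ⟨isInvariant_compl_GSupp_commutator K k hk hx, notMem_Supp.2 ?_⟩
  rw [ap_comm_of_notMem_GSupp_commutator hk hg hx, notMem_Supp.1 hgx]

theorem isClosed_compl_GSupp_commutator (hK : ∀ g ∈ K, StrictMono (ap g)) :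
    IsClosed (GSupp ⁅K, K⁆)ᶜ :=
  (isOpen_GSupp fun g hg => hK g (Subgroup.commutator_le_self K hg)).isClosed_compl

theorem IsGroupOrbital.subset_GSupp_commutator_of_Ioo_left_subset_Supp
    (h : IsGroupOrbital K α δ) (hK : ∀ g ∈ K, StrictMono (ap g)) (hg : g ∈ K) {z e : ℝ}
    (hz : z ∈ Ioo α δ) (hgz : ap g z = z) (he : α < e) (hsub : Ioo α e ⊆ Supp g) :
    Ioo α δ ⊆ GSupp ⁅K, K⁆ := by
  intro x hx
  by_contra hxK
  have hne := (isInvariant_compl_GSupp_commutator K).exists_ap_eq_self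
    (isClosed_compl_GSupp_commutator hK) hg (hK g hg) ⟨x, hxK, hx⟩ hz hgz
  obtain ⟨t, htg, ht, hte⟩ :=
    h.exists_mem_lt hK (isInvariant_compl_GSupp_commutator_sdiff_Supp hg) hne he
  exact htg.2 (hsub ⟨ht.1, hte⟩)

theorem IsGroupOrbital.subset_GSupp_commutator_of_Ioo_right_subset_Supp
    (h : IsGroupOrbital K α δ) (hK : ∀ g ∈ K, StrictMono (ap g)) (hg : g ∈ K) {z e : ℝ}
    (hz : z ∈ Ioo α δ) (hgz : ap g z = z) (he : e < δ) (hsub : Ioo e δ ⊆ Supp g) :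
    Ioo α δ ⊆ GSupp ⁅K, K⁆ := by
  intro x hx
  by_contra hxK
  have hne := (isInvariant_compl_GSupp_commutator K).exists_ap_eq_self
    (isClosed_compl_GSupp_commutator hK) hg (hK g hg) ⟨x, hxK, hx⟩ hz hgz
  obtain ⟨t, htg, ht, het⟩ :=
    h.exists_mem_gt hK (isInvariant_compl_GSupp_commutator_sdiff_Supp hg) hne he
  exact htg.2 (hsub ⟨het, ht.2⟩)

theorem Ioo_subset_GSupp_commutator_of_subset_union (hK : ∀ g ∈ K, StrictMono (ap g))
    (hf : f ∈ K) (hg : g ∈ K) {y z : ℝ} (hy : y ∈ Ioo α δ) (hfy : ap f y = y)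
    (hz : z ∈ Ioo α δ) (hgz : ap g z = z) (hsub : Ioo α δ ⊆ Supp f ∪ Supp g) :
    Ioo α δ ⊆ GSupp ⁅K, K⁆ := by
  intro x hx
  by_contra hxK
  have hclosed := isClosed_compl_GSupp_commutator hK
  have hne := (isInvariant_compl_GSupp_commutator K).exists_ap_eq_self hclosed hf (hK f hf)
    ⟨x, hxK, hx⟩ hy hfy
  obtain ⟨s, ⟨⟨-, hsf⟩, hsg⟩, hs⟩ :=
    (isInvariant_compl_GSupp_commutator_sdiff_Supp hf).exists_ap_eq_self
      (hclosed.sdiff (isOpen_Supp (hK f hf))) hg (hK g hg) hne hz hgz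
  exact (hsub hs).elim hsf hsg

end Commutator

section Germs

open Filter Topology commutatorElement

variable {K L : Subgroup PermR} {g : PermR} {α δ : ℝ}

/-- The group of elements that are the identity on some interval `(α, e)`, i.e. whose right germ
at `α` is trivial. -/
def trivialGerms (α : ℝ) : Subgroup PermR where
  carrier := {g | ∀ᶠ y in 𝓝[>] α, ap g y = y}
  one_mem' := (Eventually.of_forall ap_one : ∀ᶠ y in 𝓝[>] α, ap 1 y = y)
  mul_mem' {g h} (hg : ∀ᶠ y in 𝓝[>] α, ap g y = y) (hh : ∀ᶠ y in 𝓝[>] α, ap h y = y) := by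
    change ∀ᶠ y in 𝓝[>] α, ap (g * h) y = y
    filter_upwards [hg, hh] with y hgy hhy
    rw [ap_mul, hgy, hhy]
  inv_mem' (hg : ∀ᶠ y in 𝓝[>] α, _) := hg.mono fun _ => ap_inv_eq_self

theorem exists_eqOn_affine {f : ℝ → ℝ} {U : Set ℝ} (hU : IsPreconnected U) (hne : U.Nonempty)
    (hf : ∀ x ∈ U, ∃ m b, ∀ᶠ y in 𝓝 x, f y = m * y + b) :
    ∃ m b, EqOn f (fun y => m * y + b) U := by
  have affine_analyticAt (m b x : ℝ) : AnalyticAt ℝ (fun y => m * y + b) x := by fun_prop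
  have hf_analytic : AnalyticOnNhd ℝ f U := fun x hx => by
    obtain ⟨m, b, hmb⟩ := hf x hx
    exact (affine_analyticAt m b x).congr (EventuallyEq.symm hmb)
  obtain ⟨x, hx⟩ := hne
  obtain ⟨m, b, hmb⟩ := hf x hx
  exact ⟨m, b, hf_analytic.eqOn_of_preconnected_of_eventuallyEq
    (fun y _ => affine_analyticAt m b y) hU hx hmb⟩

theorem IsPL.isLocallyAffineAt (hg : IsPL g) {x : ℝ} (hx : x ∉ Breakpoints g ∪ {0, 1}) :
    IsLocallyAffineAt g x := by
  simp only [mem_union, mem_insert_iff, mem_singleton_iff, not_or] at hx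
  obtain ⟨hbreak, hx0, hx1⟩ := hx
  by_cases hx01 : x ∈ Icc (0 : ℝ) 1
  · by_contra hna
    exact hbreak ⟨⟨hx01.1.lt_of_ne' hx0, hx01.2.lt_of_ne hx1⟩, hna⟩
  · refine ⟨1, 0, ?_⟩
    filter_upwards [isClosed_Icc.isOpen_compl.mem_nhds hx01] with y hy
    rw [hg.2.1 y fun hy' => hy (Ioo_subset_Icc_self hy'), one_mul, add_zero]

theorem IsPL.exists_eventually_eq_of_ap_eq_self (hg : IsPL g) (hα : ap g α = α) :
    ∃ m, ∀ᶠ y in 𝓝[>] α, ap g y = α + m * (y - α) := by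
  have hfinite : (Breakpoints g ∪ {0, 1}).Finite := hg.2.2.union (toFinite _)
  have hsmooth : ∀ᶠ y in 𝓝[>] α, y ∉ Breakpoints g ∪ {0, 1} :=
    nhdsGT_le_nhdsNE α (nhdsNE_le_cofinite α hfinite.compl_mem_cofinite)
  obtain ⟨e, he, hsub⟩ := mem_nhdsGT_iff_exists_Ioo_subset.1 hsmooth
  obtain ⟨m, b, hmb⟩ := exists_eqOn_affine isPreconnected_Ioo (nonempty_Ioo.2 he)
    fun x hx => hg.isLocallyAffineAt (hsub hx)
  have hev : ap g =ᶠ[𝓝[>] α] fun y => m * y + b := hmb.eventuallyEq_of_mem (Ioo_mem_nhdsGT he)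
  have hα_affine : ap g α = m * α + b := tendsto_nhds_unique_of_eventuallyEq
    ((continuous_ap hg.1).continuousWithinAt (s := Ioi α))
    (Continuous.continuousWithinAt (by fun_prop : Continuous fun y => m * y + b)) hev
  refine ⟨m, hev.mono fun y hy => ?_⟩
  linear_combination hy - hα_affine + hα

theorem tendsto_ap_nhdsGT (hg : StrictMono (ap g)) (hα : ap g α = α) :
    Tendsto (ap g) (𝓝[>] α) (𝓝[>] α) := by
  have hmaps : MapsTo (ap g) (Ioi α) (Ioi (ap g α)) := fun _ hy => hg hy
  simpa only [hα] using
    ((continuous_ap hg).continuousWithinAt (x := α)).tendsto_nhdsWithin hmaps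

theorem commutator_le_trivialGerms (hK : ∀ g ∈ K, IsPL g) (hα : α ∉ GSupp K) :
    ⁅K, K⁆ ≤ trivialGerms α := by
  refine Subgroup.commutator_le.2 fun g hg h hh => ?_
  have hgα := notMem_GSupp.1 hα g hg
  have hhα := notMem_GSupp.1 hα h hh
  obtain ⟨m, hm⟩ := (hK g hg).exists_eventually_eq_of_ap_eq_self hgα
  obtain ⟨n, hn⟩ := (hK h hh).exists_eventually_eq_of_ap_eq_self hhα
  filter_upwards [hm, hn, (tendsto_ap_nhdsGT (hK g hg).1 hgα).eventually hn,
    (tendsto_ap_nhdsGT (hK h hh).1 hhα).eventually hm] with y hgy hhy hhgy hghy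
  rw [ap_commutatorElement_eq_self_iff, hhgy, hghy, hgy, hhy]
  ring

theorem IsGroupOrbital.commutator (h : IsGroupOrbital L α δ)
    (hL : ∀ g ∈ L, StrictMono (ap g)) (hgerm : L ≤ trivialGerms α) :
    IsGroupOrbital ⁅L, L⁆ α δ := by
  refine h.of_le (Subgroup.commutator_le_self L) fun x hx => ?_
  by_contra hxL
  obtain ⟨g, hg, hgx⟩ := mem_iUnion₂.1 (h.2.1 hx)
  obtain ⟨e, he, hsub⟩ := mem_nhdsGT_iff_exists_Ioo_subset.1 (hgerm hg)
  obtain ⟨t, ⟨-, hgt⟩, ht, hte⟩ := h.exists_mem_lt hL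
    (isInvariant_compl_GSupp_commutator_inter_Supp hg) ⟨x, ⟨hxL, hgx⟩, hx⟩ he
  exact hgt (hsub ⟨ht.1, hte⟩)

theorem IsGroupOrbital.map_derivedSeries (h : IsGroupOrbital L α δ)
    (hL : ∀ g ∈ L, StrictMono (ap g)) (hgerm : L ≤ trivialGerms α) (n : ℕ) :
    IsGroupOrbital ((derivedSeries L n).map L.subtype) α δ := by
  induction n with
  | zero => rwa [derivedSeries_zero, ← MonoidHom.range_eq_map, Subgroup.range_subtype]
  | succ n ih =>
    have hle : (derivedSeries L n).map L.subtype ≤ L := Subgroup.map_subtype_le _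
    rw [derivedSeries_succ, Subgroup.map_commutator]
    exact ih.commutator (fun g hg => hL g (hle hg)) (hle.trans hgerm)

theorem IsGroupOrbital.not_isSolvable_of_le_trivialGerms (h : IsGroupOrbital L α δ)
    (hL : ∀ g ∈ L, StrictMono (ap g)) (hgerm : L ≤ trivialGerms α) : ¬ Group.IsSolvable L := by
  rintro ⟨n, hn⟩
  have horbital := h.map_derivedSeries hL hgerm n
  rw [hn, Subgroup.map_bot] at horbital
  obtain ⟨x, hx⟩ := nonempty_Ioo.2 horbital.1
  refine notMem_GSupp.2 (fun g hg => ?_) (horbital.2.1 hx)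
  rw [Subgroup.mem_bot.1 hg, ap_one]

theorem IsGroupOrbital.not_isSolvable (h : IsGroupOrbital K α δ) (hK : ∀ g ∈ K, IsPL g)
    (hsub : Ioo α δ ⊆ GSupp ⁅K, K⁆) : ¬ Group.IsSolvable K := by
  have hle : ⁅K, K⁆ ≤ K := Subgroup.commutator_le_self K
  intro hsolvable
  exact (h.of_le hle hsub).not_isSolvable_of_le_trivialGerms (fun g hg => (hK g (hle hg)).1)
    (commutator_le_trivialGerms hK h.2.2.1)
    (Group.isSolvable_of_isSolvable_injective (Subgroup.inclusion_injective hle))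

end Germs

section BadOverlap

variable {G : Subgroup PermR}

theorem not_isSolvable_of_le {K : Subgroup PermR} (hKG : K ≤ G) (hK : ¬ Group.IsSolvable K) :
    ¬ Group.IsSolvable G := fun _ =>
  hK (Group.isSolvable_of_isSolvable_injective (Subgroup.inclusion_injective hKG))

theorem AdmitsTransitionChain.not_isSolvable (hG : ∀ g ∈ G, IsPL g)
    (h : AdmitsTransitionChain G) : ¬ Group.IsSolvable G := by
  obtain ⟨f, hf, g, hg, a, b, c, d, hfab, hgcd, hac, hcb, hbd⟩ := h
  set K := Subgroup.closure {f, g}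
  have hKG : K ≤ G := (Subgroup.closure_le G).2 (pair_subset hf hg)
  have hK : ∀ k ∈ K, IsPL k := fun k hk => hG k (hKG hk)
  have hfK : f ∈ K := Subgroup.subset_closure (mem_insert f _)
  have hgK : g ∈ K := Subgroup.subset_closure (mem_insert_of_mem f rfl)
  have hGSupp : GSupp K = Supp f ∪ Supp g := by rw [GSupp_closure, biUnion_pair]
  have hcb_sub : Icc c b ⊆ GSupp K := fun x hx => by
    rw [hGSupp]
    rcases hx.2.lt_or_eq with hxb | rfl
    · exact Or.inl (hfab.2.1 ⟨hac.trans_le hx.1, hxb⟩)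
    · exact Or.inr (hgcd.2.1 ⟨hcb, hbd⟩)
  obtain ⟨α, δ, hαδ, hsub⟩ :=
    exists_isGroupOrbital (fun k hk => (hK k hk).isUnitHomeo) hcb.le hcb_sub
  refine not_isSolvable_of_le hKG (hαδ.not_isSolvable hK ?_)
  exact Ioo_subset_GSupp_commutator_of_subset_union (fun k hk => (hK k hk).1) hfK hgK
    (hsub (right_mem_Icc.2 hcb.le)) hfab.ap_right (hsub (left_mem_Icc.2 hcb.le)) hgcd.ap_left
    (hGSupp ▸ hαδ.2.1)

theorem AdmitsOneSidedOverlap.not_isSolvable (hG : ∀ g ∈ G, IsPL g)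
    (h : AdmitsOneSidedOverlap G) : ¬ Group.IsSolvable G := by
  obtain ⟨f, hf, g, hg, a, b, c, hac, hcb, hends⟩ := h
  set K := Subgroup.closure {f, g}
  have hKG : K ≤ G := (Subgroup.closure_le G).2 (pair_subset hf hg)
  have hK : ∀ k ∈ K, IsPL k := fun k hk => hG k (hKG hk)
  have hK_mono : ∀ k ∈ K, StrictMono (ap k) := fun k hk => (hK k hk).1
  have hgK : g ∈ K := Subgroup.subset_closure (mem_insert_of_mem f rfl)
  have hGSupp : GSupp K = Supp f ∪ Supp g := by rw [GSupp_closure, biUnion_pair]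
  have hfab : IsOrbital f a b := hends.elim And.left And.left
  have hc_sub : Icc c c ⊆ GSupp K := by
    rw [Icc_self, singleton_subset_iff, hGSupp]
    exact Or.inl (hfab.2.1 ⟨hac, hcb⟩)
  obtain ⟨α, δ, hαδ, hsub⟩ :=
    exists_isGroupOrbital (fun k hk => (hK k hk).isUnitHomeo) le_rfl hc_sub
  have hc : c ∈ Ioo α δ := hsub (left_mem_Icc.2 le_rfl)
  refine not_isSolvable_of_le hKG (hαδ.not_isSolvable hK ?_)
  rcases hends with ⟨-, hgac⟩ | ⟨-, hgcb⟩
  · have ha : a ∉ GSupp K := hGSupp ▸ (not_or.2 ⟨hfab.2.2.1, hgac.2.2.1⟩ : a ∉ Supp f ∪ Supp g)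
    have haα : a ≤ α := not_lt.1 fun hαa => ha (hαδ.2.1 ⟨hαa, hac.trans hc.2⟩)
    exact hαδ.subset_GSupp_commutator_of_Ioo_left_subset_Supp hK_mono hgK hc hgac.ap_right hc.1
      ((Ioo_subset_Ioo_left haα).trans hgac.2.1)
  · have hb : b ∉ GSupp K := hGSupp ▸ (not_or.2 ⟨hfab.2.2.2, hgcb.2.2.2⟩ : b ∉ Supp f ∪ Supp g)
    have hδb : δ ≤ b := not_lt.1 fun hbδ => hb (hαδ.2.1 ⟨hc.1.trans hcb, hbδ⟩)
    exact hαδ.subset_GSupp_commutator_of_Ioo_right_subset_Supp hK_mono hgK hc hgcb.ap_left hc.2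
      ((Ioo_subset_Ioo_right hδb).trans hgcb.2.1)

theorem AdmitsBadOverlap.transitionChain_or_oneSidedOverlap (h : AdmitsBadOverlap G) :
    AdmitsTransitionChain G ∨ AdmitsOneSidedOverlap G := by
  obtain ⟨f, hf, g, hg, a, b, c, d, hfab, hgcd, ⟨x, hxab, hxcd⟩, hne, hfg, hgf⟩ := h
  wlog hac : a ≤ c generalizing f g a b c d
  · exact this g hg f hf c d a b hgcd hfab hxcd hxab hne.symm hgf hfg (le_of_not_ge hac)
  have hcb : c < b := hxcd.1.trans hxab.2
  rcases hac.eq_or_lt with rfl | hac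
  · rcases lt_trichotomy b d with hbd | rfl | hdb
    · exact Or.inr ⟨g, hg, f, hf, a, d, b, hcb, hbd, Or.inl ⟨hgcd, hfab⟩⟩
    · exact absurd rfl hne
    · exact Or.inr ⟨f, hf, g, hg, a, b, d, hgcd.1, hdb, Or.inl ⟨hfab, hgcd⟩⟩
  · have hbd : b ≤ d := not_lt.1 fun hdb => hgf (Icc_subset_Ioo hac hdb)
    rcases hbd.eq_or_lt with rfl | hbd
    · exact Or.inr ⟨f, hf, g, hg, a, b, c, hac, hcb, Or.inr ⟨hfab, hgcd⟩⟩
    · exact Or.inl ⟨f, hf, g, hg, a, b, c, d, hfab, hgcd, hac, hcb, hbd⟩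

theorem AdmitsBadOverlap.not_isSolvable (hG : ∀ g ∈ G, IsPL g) (h : AdmitsBadOverlap G) :
    ¬ Group.IsSolvable G :=
  h.transitionChain_or_oneSidedOverlap.elim (·.not_isSolvable hG) (·.not_isSolvable hG)

end BadOverlap

theorem statement13 (G H : Subgroup PermR) (hPL : ∀ g ∈ G, IsPL g)
    (hGH : G ≤ H) (hHS : H ≤ SplitGroup G) (hbad : AdmitsBadOverlap H) :
    AdmitsBadOverlap G ∧ ¬ IsSolvable ↥G := by
  have hG : AdmitsBadOverlap G := (hbad.mono hHS).of_SplitGroup fun g hg => (hPL g hg).isUnitHomeo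
  exact ⟨hG, hG.not_isSolvable hPL⟩

end PLPaper
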